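/- Gauss–Chebyshev cubature with explicit Chebyshev nodes (Eqs. (9.2a)–(9.2b), the case d = 0 of Theorem 9.1): for ε_+, ε_− ∈ {0,1} and every f ∈ ℙ^{(2m+1,n)}, (1/((2π)^n n!)) ∫_0^π⋯∫_0^π f(cos ξ_1,…,cos ξ_n) ρ(ξ⃗) dξ_1⋯dξ_n = (2(m+n)+ε_++ε_−)^{−n} Σ_{λ̂ ∈ Λ^{(m,n)}} f(cos(ξ_λ̂^{(m,n)})) ρ(ξ_λ̂^{(m,n)}), where ρ(ξ⃗) := Π_{j=1}^n 2^{ε_++ε_−}(1+ε_+ cos ξ_j)(1−ε_− cos ξ_j) · Π_{1≤j<k≤n}(cos ξ_j − cos ξ_k)², and the node ξ_λ̂^{(m,n)} has j-th component ξ^{(m+n)}_{λ̂_j+n−j} with ξ^{(m+n)}_ℓ := π(ℓ+1/2+ε_−/2)/(m+n+ε_+/2+ε_−/2) for 0 ≤ ℓ < m+n. -/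

import Mathlib

open MeasureTheory Real Finset

noncomputable section

/-- The fundamental alcove `Λ^{(m,n)}` : decreasing sequences with entries ≤ m. -/
def Lam (m n : ℕ) : Finset (Fin n → ℕ) :=
  (Fintype.piFinset fun _ => Finset.range (m + 1)).filter
    fun lam => ∀ i j : Fin n, i ≤ j → lam j ≤ lam i

/-- The symmetric monomial `M_λ(x)`. -/
def msym (n : ℕ) (lam : Fin n → ℕ) : (Fin n → ℝ) → ℝ := fun x =>
  ∑ mu ∈ Finset.univ.image (fun σ : Equiv.Perm (Fin n) => lam ∘ σ), ∏ j : Fin n, x j ^ mu j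

/-- The space `ℙ^{(m,n)}`: span of the symmetric monomials `M_λ`, `λ ∈ Λ^{(m,n)}`. -/
def pSpace (m n : ℕ) : Submodule ℝ ((Fin n → ℝ) → ℝ) :=
  Submodule.span ℝ (msym n '' (Lam m n : Set (Fin n → ℕ)))

/-- The Chebyshev points `ξ^{(N)}_ℓ = π(ℓ + 1/2 + ε₋/2)/(N + ε₊/2 + ε₋/2)`. -/
def chebNode (εp εm N : ℕ) (ℓ : ℕ) : ℝ :=
  π * ((ℓ : ℝ) + 1 / 2 + (εm : ℝ) / 2) / ((N : ℝ) + (εp : ℝ) / 2 + (εm : ℝ) / 2)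

/-- The node with `j`-th component `ξ^{(m+n)}_{λ̂_j + n - j}`. -/
def chebNodeVec (εp εm m n : ℕ) (lh : Fin n → ℕ) : Fin n → ℝ :=
  fun j => chebNode εp εm (m + n) (lh j + (n - 1 - (j : ℕ)))

/-- The circular Jacobi weight `ρ(ξ⃗)`. -/
def rhoCJ (εp εm n : ℕ) (ξv : Fin n → ℝ) : ℝ :=
  (∏ j : Fin n, 2 ^ (εp + εm) * (1 + εp * Real.cos (ξv j)) * (1 - εm * Real.cos (ξv j))) *
    ∏ j : Fin n, ∏ k ∈ Finset.univ.filter (fun k => j < k),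
      (Real.cos (ξv j) - Real.cos (ξv k)) ^ 2

/-!
Chebyshev polynomials show that averaging `g(cos θ)` over `M` equispaced points of the circle is
exact for polynomials `g` of degree less than `M`. Take `M = 2N + ε₊ + ε₋`, with the points placed
symmetrically about the real axis. The one-variable weight has degree at most `ε₊ + ε₋` and kills
the contributions of the points on the axis, so the rule folds onto the `N` Chebyshev nodes and is
a Gauss rule, exact in degree less than `2N`. Its `n`-fold tensor power with `N = m + n` applies to
`f` times the squared Vandermonde determinant, of degree `2m + 1 + 2(n - 1) < 2N` in each variable.
The resulting summand is symmetric in the node indices and vanishes when two of them coincide, so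
the sum is `n!` times the sum over strictly decreasing index vectors, and these are the
`λ + (n - 1, …, 1, 0)` with `λ ∈ Λ^{(m,n)}`.
-/

section EquispacedQuadrature

lemma sum_cos_int_mul_equispaced_eq_zero {M : ℕ} {k : ℤ} (hk : ¬ (M : ℤ) ∣ k) (c : ℝ) :
    ∑ l ∈ range M, cos (k * (2 * π / M * l + c)) = 0 := by
  rcases eq_or_ne M 0 with rfl | hM
  · simp
  have hM' : (M : ℝ) ≠ 0 := Nat.cast_ne_zero.2 hM
  have sin_ne_zero : sin (k * (2 * π / M) / 2) ≠ 0 := by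
    rw [Ne, sin_eq_zero_iff]
    rintro ⟨j, hj⟩
    have hjk : (j : ℝ) * M = k := by
      field_simp at hj
      linarith
    exact hk ⟨j, by rw [mul_comm]; exact_mod_cast hjk.symm⟩
  have sin_eq_zero : sin (M * (k * (2 * π / M)) / 2) = 0 := by
    rw [show (M * (k * (2 * π / M)) / 2 : ℝ) = k * π by field_simp, sin_int_mul_pi]
  have sum_formula := sin_mul_sum_cos M (k * (2 * π / M)) (k * c)
  rw [sin_eq_zero, zero_mul] at sum_formula
  refine Eq.trans (sum_congr rfl fun l _ => ?_)
    ((mul_eq_zero.1 sum_formula).resolve_left sin_ne_zero)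
  ring_nf

open Polynomial.Chebyshev in
theorem integral_eval_cos_eq_sum_equispaced {M : ℕ} {p : Polynomial ℝ} (hp : p.degree < M)
    (c : ℝ) :
    ∫ θ in 0..π, p.eval (cos θ) = π / M * ∑ l ∈ range M, p.eval (cos (2 * π / M * l + c)) := by
  rw [← Polynomial.mem_degreeLT, ← (chebyshevTsequence ℝ).span_degreeLT (by simp)] at hp
  induction hp using Submodule.span_induction with
  | mem p hp =>
    obtain ⟨k, hkM, rfl⟩ := hp
    have hM : (M : ℝ) ≠ 0 := Nat.cast_ne_zero.2 (Nat.ne_zero_of_lt hkM)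
    change ∫ θ in 0..π, (T ℝ k).eval (cos θ) = π / M * ∑ l ∈ range M, (T ℝ k).eval _
    rcases eq_or_ne k 0 with rfl | hk
    · simp [hM]
    · rw [← integral_measureT_eq_integral_cos (f := fun x => (T ℝ k).eval x)]
      have not_dvd : ¬ (M : ℤ) ∣ k :=
        mod_cast Nat.not_dvd_of_pos_of_lt (Nat.pos_of_ne_zero hk) hkM
      simp only [T_real_cos, sum_cos_int_mul_equispaced_eq_zero not_dvd, mul_zero]
      exact integral_eval_T_real_measureT_of_ne_zero (mod_cast hk)
  | zero => simp
  | add p q _ _ hp hq =>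
    simp only [Polynomial.eval_add, sum_add_distrib, mul_add, ← hp, ← hq]
    exact intervalIntegral.integral_add (Continuous.intervalIntegrable (by fun_prop) _ _)
      (Continuous.intervalIntegrable (by fun_prop) _ _)
  | smul a p _ hp =>
    simp only [Polynomial.eval_smul, smul_eq_mul, intervalIntegral.integral_const_mul, hp,
      ← mul_sum]
    ring

end EquispacedQuadrature

section ChebyshevNodes

variable {εp εm N : ℕ}

lemma chebNode_eq_equispaced {M : ℕ} (hM : M = 2 * N + εp + εm) (l : ℕ) :
    chebNode εp εm N l = 2 * π / M * l + π * (1 + εm) / M := by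
  have hden : (N + εp / 2 + εm / 2 : ℝ) = M / 2 := by
    rw [hM]
    push_cast
    ring
  rw [chebNode, hden, div_div_eq_mul_div]
  ring

lemma chebNode_add_chebNode {k l : ℕ} (h : k + l + 1 = 2 * N + εp) :
    chebNode εp εm N k + chebNode εp εm N l = 2 * π := by
  have hcast : (k + l + 1 : ℝ) = 2 * N + εp := mod_cast h
  have hden : (N + εp / 2 + εm / 2 : ℝ) ≠ 0 := by
    linarith [show (0 : ℝ) < k + l + 1 + εm by positivity]
  rw [chebNode, chebNode, ← add_div, div_eq_iff hden]
  linear_combination π * hcast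

lemma chebNode_two_mul_add : chebNode εp 1 N (2 * N + εp) = 2 * π := by
  rw [chebNode, div_eq_iff (by positivity)]
  push_cast
  ring

/- The `2N + ε₊ + ε₋` equispaced points on the circle consist of the nodes in `(0, π)`, their
reflections in the real axis, and the points `π` and `2π` when `ε₊ = 1` and `ε₋ = 1`. -/
theorem sum_chebNode_eq_two_mul_sum {g : ℝ → ℝ} (hp : εp = 0 ∨ εp = 1 ∧ g (-1) = 0)
    (hm : εm = 0 ∨ εm = 1 ∧ g 1 = 0) :
    ∑ l ∈ range (2 * N + εp + εm), g (cos (chebNode εp εm N l)) =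
      2 * ∑ l ∈ range N, g (cos (chebNode εp εm N l)) := by
  have sum_at_pi : ∑ l ∈ range εp, g (cos (chebNode εp εm N (N + l))) = 0 := by
    rcases hp with rfl | ⟨rfl, hg⟩
    · simp
    · have node_eq : chebNode 1 εm N N = π := by
        linarith [chebNode_add_chebNode (εp := 1) (εm := εm) (N := N) (k := N) (l := N) (by ring)]
      simp [node_eq, hg]
  have sum_at_two_pi : ∑ l ∈ range εm, g (cos (chebNode εp εm N (2 * N + εp + l))) = 0 := by
    rcases hm with rfl | ⟨rfl, hg⟩
    · simp
    · simp [chebNode_two_mul_add, hg]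
  have sum_reflected : ∑ l ∈ range N, g (cos (chebNode εp εm N (N + εp + l))) =
      ∑ l ∈ range N, g (cos (chebNode εp εm N l)) := by
    rw [← sum_range_reflect]
    refine sum_congr rfl fun l hl => ?_
    have hlN := mem_range.1 hl
    rw [eq_sub_of_add_eq (chebNode_add_chebNode (show N + εp + (N - 1 - l) + l + 1 = _ by omega)),
      cos_two_pi_sub]
  rw [sum_range_add, sum_at_two_pi, show 2 * N + εp = N + εp + N by ring, sum_range_add,
    sum_range_add, sum_at_pi, sum_reflected]
  ring

end ChebyshevNodes

section JacobiWeight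

open Polynomial

/-- The one-variable weight of `rhoCJ`, as a polynomial in `x = cos ξ`. -/
def jacobiWeight (εp εm : ℕ) : ℝ[X] :=
  C (2 ^ (εp + εm)) * (1 + C (εp : ℝ) * X) * (1 - C (εm : ℝ) * X)

lemma eval_jacobiWeight (εp εm : ℕ) (x : ℝ) :
    (jacobiWeight εp εm).eval x = 2 ^ (εp + εm) * (1 + εp * x) * (1 - εm * x) := by
  simp [jacobiWeight]

lemma natDegree_jacobiWeight_le (εp εm : ℕ) : (jacobiWeight εp εm).natDegree ≤ εp + εm := by
  have natDegree_factor_le (c : ℝ) (ε : ℕ) : (1 + C (c * ε) * X : ℝ[X]).natDegree ≤ ε := by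
    rcases ε with _ | ε
    · simp
    · compute_degree
      omega
  have factorization : jacobiWeight εp εm =
      C (2 ^ (εp + εm)) * (1 + C (1 * (εp : ℝ)) * X) * (1 + C (-1 * (εm : ℝ)) * X) := by
    simp [jacobiWeight, sub_eq_add_neg]
  rw [factorization]
  refine natDegree_mul_le_of_le ?_ (natDegree_factor_le (-1) εm)
  exact (natDegree_C_mul_le _ _).trans (natDegree_factor_le 1 εp)

theorem integral_eval_cos_mul_jacobiWeight {εp εm N : ℕ} (hεp : εp = 0 ∨ εp = 1)
    (hεm : εm = 0 ∨ εm = 1) {p : ℝ[X]} (hp : p.natDegree < 2 * N) :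
    ∫ θ in Set.Ioo 0 π, p.eval (cos θ) * (jacobiWeight εp εm).eval (cos θ) =
      ∑ l ∈ range N, 2 * π / (2 * N + εp + εm) *
        (jacobiWeight εp εm).eval (cos (chebNode εp εm N l)) *
          p.eval (cos (chebNode εp εm N l)) := by
  set q := p * jacobiWeight εp εm with hq
  have hdeg : q.degree < (2 * N + εp + εm : ℕ) :=
    degree_le_natDegree.trans_lt <| by
      have hmul : q.natDegree ≤ p.natDegree + (jacobiWeight εp εm).natDegree := natDegree_mul_le
      have hweight := natDegree_jacobiWeight_le εp εm
      exact_mod_cast (by omega : q.natDegree < 2 * N + εp + εm)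
  have q_neg_one : εp = 0 ∨ εp = 1 ∧ q.eval (-1) = 0 :=
    hεp.imp_right fun h => ⟨h, by simp [hq, eval_jacobiWeight, h]⟩
  have q_one : εm = 0 ∨ εm = 1 ∧ q.eval 1 = 0 :=
    hεm.imp_right fun h => ⟨h, by simp [hq, eval_jacobiWeight, h]⟩
  calc ∫ θ in Set.Ioo 0 π, p.eval (cos θ) * (jacobiWeight εp εm).eval (cos θ)
      = ∫ θ in 0..π, q.eval (cos θ) := by
        simp only [intervalIntegral.integral_of_le pi_pos.le, integral_Ioc_eq_integral_Ioo, hq,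
          eval_mul]
    _ = π / (2 * N + εp + εm : ℕ) *
          ∑ l ∈ range (2 * N + εp + εm), q.eval (cos (chebNode εp εm N l)) := by
        simp only [chebNode_eq_equispaced rfl]
        exact integral_eval_cos_eq_sum_equispaced hdeg _
    _ = π / (2 * N + εp + εm : ℕ) *
          (2 * ∑ l ∈ range N, q.eval (cos (chebNode εp εm N l))) := by
        rw [sum_chebNode_eq_two_mul_sum (g := fun x => q.eval x) q_neg_one q_one]
    _ = _ := by
        simp only [mul_sum, hq, eval_mul]
        push_cast
        exact sum_congr rfl fun l _ => by ring

end JacobiWeight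

section ProductCubature

theorem integral_pi_eval_mul_prod_eq_sum {ι α κ 𝕜 : Type*} [Fintype ι] [DecidableEq ι] [RCLike 𝕜]
    [MeasurableSpace α] {μ : Measure α} [SigmaFinite μ] {φ w : α → 𝕜} {s : Finset κ}
    {node weight : κ → 𝕜} {D : ℕ}
    (integrable : ∀ a ≤ D, Integrable (fun x => φ x ^ a * w x) μ)
    (quadrature : ∀ a ≤ D, ∫ x, φ x ^ a * w x ∂μ = ∑ k ∈ s, weight k * node k ^ a)
    {p : MvPolynomial ι 𝕜} (hp : p ∈ MvPolynomial.restrictDegree ι 𝕜 D) :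
    ∫ x : ι → α, p.eval (fun i => φ (x i)) * ∏ i, w (x i) ∂Measure.pi (fun _ => μ) =
      ∑ k ∈ Fintype.piFinset fun _ : ι => s,
        (∏ i, weight (k i)) * p.eval (fun i => node (k i)) := by
  rw [MvPolynomial.mem_restrictDegree] at hp
  simp only [MvPolynomial.eval_eq', sum_mul, mul_sum, mul_assoc, ← prod_mul_distrib]
  rw [sum_comm, integral_finsetSum]
  · refine sum_congr rfl fun d hd => ?_
    calc ∫ x : ι → α, p.coeff d * ∏ i, φ (x i) ^ d i * w (x i) ∂Measure.pi (fun _ => μ)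
        = p.coeff d * ∏ i, ∑ k ∈ s, weight k * node k ^ d i := by
          rw [integral_const_mul, integral_fintype_prod_eq_prod (fun i x => φ x ^ d i * w x),
            prod_congr rfl fun i _ => quadrature (d i) (hp d hd i)]
      _ = _ := by
          simp only [prod_univ_sum, mul_sum, prod_mul_distrib, mul_left_comm]
  · exact fun d hd => (Integrable.fintype_prod fun i => integrable (d i) (hp d hd i)).const_mul _

end ProductCubature

section RestrictDegree

variable {σ R : Type*} [CommSemiring R]

lemma mem_restrictDegree_iff_degreeOf_le {p : MvPolynomial σ R} {D : ℕ} :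
    p ∈ MvPolynomial.restrictDegree σ R D ↔ ∀ i, p.degreeOf i ≤ D := by
  simp only [MvPolynomial.mem_restrictDegree, MvPolynomial.degreeOf_le_iff]
  exact ⟨fun h i d hd => h d hd i, fun h d hd i => h i d hd⟩

lemma mul_mem_restrictDegree {p q : MvPolynomial σ R} {D E : ℕ}
    (hp : p ∈ MvPolynomial.restrictDegree σ R D) (hq : q ∈ MvPolynomial.restrictDegree σ R E) :
    p * q ∈ MvPolynomial.restrictDegree σ R (D + E) := by
  rw [mem_restrictDegree_iff_degreeOf_le] at hp hq ⊢
  exact fun i => (MvPolynomial.degreeOf_mul_le i p q).trans (add_le_add (hp i) (hq i))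

lemma prod_X_pow_mem_restrictDegree [Fintype σ] {d : σ → ℕ} {D : ℕ} (hd : ∀ i, d i ≤ D) :
    ∏ i, (MvPolynomial.X i ^ d i : MvPolynomial σ R) ∈ MvPolynomial.restrictDegree σ R D := by
  have eq_monomial : ∏ i, (MvPolynomial.X i ^ d i : MvPolynomial σ R) =
      MvPolynomial.monomial (Finsupp.equivFunOnFinite.symm d) 1 := by
    rw [MvPolynomial.monomial_eq, Finsupp.prod_fintype _ _ (by simp)]
    simp
  rw [eq_monomial]
  exact (MvPolynomial.monomial_mem_restrictSupport R).2 (Or.inl hd)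

end RestrictDegree

section Vandermonde

variable {n : ℕ} {R : Type*} [CommRing R]

lemma eval_det_vandermonde_X (x : Fin n → R) :
    MvPolynomial.eval x (Matrix.vandermonde MvPolynomial.X).det = (Matrix.vandermonde x).det := by
  simp [Matrix.det_vandermonde]

lemma det_vandermonde_X_mem_restrictDegree :
    (Matrix.vandermonde MvPolynomial.X).det ∈ MvPolynomial.restrictDegree (Fin n) R (n - 1) := by
  rw [← Matrix.det_transpose, Matrix.det_apply]
  refine Submodule.sum_mem _ fun σ _ => ?_
  rw [Units.smul_def]
  exact zsmul_mem (prod_X_pow_mem_restrictDegree fun i => Nat.le_sub_one_of_lt (σ i).isLt) _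

lemma det_vandermonde_comp_perm_sq (σ : Equiv.Perm (Fin n)) (x : Fin n → R) :
    (Matrix.vandermonde (x ∘ σ)).det ^ 2 = (Matrix.vandermonde x).det ^ 2 := by
  rw [show Matrix.vandermonde (x ∘ σ) = (Matrix.vandermonde x).submatrix σ id from rfl,
    Matrix.det_permute, mul_pow]
  rcases Int.units_eq_one_or (Equiv.Perm.sign σ) with h | h <;> simp [h]

end Vandermonde

section CircularJacobiDensity

variable {εp εm n : ℕ}

lemma rhoCJ_eq_det_sq_mul_prod (ξ : Fin n → ℝ) :
    rhoCJ εp εm n ξ = (Matrix.vandermonde fun j => cos (ξ j)).det ^ 2 *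
      ∏ j, (jacobiWeight εp εm).eval (cos (ξ j)) := by
  simp only [rhoCJ, eval_jacobiWeight, Matrix.det_vandermonde, ← prod_pow]
  rw [mul_comm]
  congr! 3 with j _
  · ext k; simp
  · ring

lemma rhoCJ_comp_perm (σ : Equiv.Perm (Fin n)) (ξ : Fin n → ℝ) :
    rhoCJ εp εm n (ξ ∘ σ) = rhoCJ εp εm n ξ := by
  rw [rhoCJ_eq_det_sq_mul_prod, rhoCJ_eq_det_sq_mul_prod]
  exact congr_arg₂ (· * ·) (det_vandermonde_comp_perm_sq σ fun j => cos (ξ j))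
    (Equiv.prod_comp σ fun j => (jacobiWeight εp εm).eval (cos (ξ j)))

lemma rhoCJ_eq_zero_of_not_injective {ξ : Fin n → ℝ} (hξ : ¬ Function.Injective ξ) :
    rhoCJ εp εm n ξ = 0 := by
  have hcos : ¬ Function.Injective (cos ∘ ξ) := fun h => hξ h.of_comp
  have det_eq_zero : (Matrix.vandermonde fun j => cos (ξ j)).det = 0 :=
    not_not.1 (mt Matrix.det_vandermonde_ne_zero_iff.1 hcos)
  rw [rhoCJ_eq_det_sq_mul_prod, det_eq_zero, zero_pow two_ne_zero, zero_mul]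

theorem integral_eval_cos_mul_rhoCJ {N D : ℕ} (hεp : εp = 0 ∨ εp = 1) (hεm : εm = 0 ∨ εm = 1)
    {p : MvPolynomial (Fin n) ℝ} (hp : p ∈ MvPolynomial.restrictDegree (Fin n) ℝ D)
    (hD : D + 2 * (n - 1) < 2 * N) :
    ∫ ξ in Set.univ.pi fun _ : Fin n => Set.Ioo 0 π,
        p.eval (fun j => cos (ξ j)) * rhoCJ εp εm n ξ =
      (2 * π / (2 * N + εp + εm)) ^ n * ∑ l ∈ Fintype.piFinset fun _ : Fin n => range N,
        p.eval (fun j => cos (chebNode εp εm N (l j))) *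
          rhoCJ εp εm n (fun j => chebNode εp εm N (l j)) := by
  set V : MvPolynomial (Fin n) ℝ := (Matrix.vandermonde MvPolynomial.X).det
  have eval_mul_rhoCJ (ξ : Fin n → ℝ) : p.eval (fun j => cos (ξ j)) * rhoCJ εp εm n ξ =
      (p * (V * V)).eval (fun j => cos (ξ j)) * ∏ j, (jacobiWeight εp εm).eval (cos (ξ j)) := by
    simp only [rhoCJ_eq_det_sq_mul_prod, map_mul, V, eval_det_vandermonde_X]
    ring
  have mem_restrictDegree : p * (V * V) ∈
      MvPolynomial.restrictDegree (Fin n) ℝ (D + ((n - 1) + (n - 1))) :=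
    mul_mem_restrictDegree hp (mul_mem_restrictDegree det_vandermonde_X_mem_restrictDegree
      det_vandermonde_X_mem_restrictDegree)
  have integrable (a : ℕ) : IntegrableOn
      (fun θ => cos θ ^ a * (jacobiWeight εp εm).eval (cos θ)) (Set.Ioo 0 π) :=
    (Continuous.integrableOn_Icc (by fun_prop)).mono_set Set.Ioo_subset_Icc_self
  have quadrature (a : ℕ) (ha : a ≤ D + ((n - 1) + (n - 1))) :
      ∫ θ in Set.Ioo 0 π, cos θ ^ a * (jacobiWeight εp εm).eval (cos θ) =
        ∑ l ∈ range N, 2 * π / (2 * N + εp + εm) *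
          (jacobiWeight εp εm).eval (cos (chebNode εp εm N l)) *
            cos (chebNode εp εm N l) ^ a := by
    simpa using integral_eval_cos_mul_jacobiWeight hεp hεm (p := Polynomial.X ^ a) (N := N)
      (by rw [Polynomial.natDegree_X_pow]; omega)
  simp only [eval_mul_rhoCJ, volume_pi, Measure.restrict_pi_pi]
  rw [integral_pi_eval_mul_prod_eq_sum (fun a _ => integrable a) quadrature mem_restrictDegree]
  simp only [prod_mul_distrib, prod_const, card_univ, Fintype.card_fin, mul_sum]
  exact sum_congr rfl fun l _ => by ring

end CircularJacobiDensity

section SymmetricPolynomials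

variable {n : ℕ}

lemma mem_Lam {m : ℕ} {lam : Fin n → ℕ} : lam ∈ Lam m n ↔ (∀ j, lam j ≤ m) ∧ Antitone lam := by
  simp [Lam, Antitone]

lemma msym_comp_perm (lam : Fin n → ℕ) (σ : Equiv.Perm (Fin n)) (x : Fin n → ℝ) :
    msym n lam (x ∘ σ) = msym n lam x := by
  refine sum_equiv (σ.arrowCongr (Equiv.refl ℕ)) (fun mu => ?_) fun mu _ => ?_
  · simp only [mem_image, mem_univ, true_and]
    refine (Equiv.mulRight σ⁻¹).exists_congr fun τ => ?_
    exact σ.symm.surjective.injective_comp_right.eq_iff.symm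
  · simpa using Equiv.prod_comp σ fun j => x j ^ mu (σ.symm j)

lemma pSpace_comp_perm {D : ℕ} {f : (Fin n → ℝ) → ℝ} (hf : f ∈ pSpace D n)
    (σ : Equiv.Perm (Fin n)) (x : Fin n → ℝ) : f (x ∘ σ) = f x := by
  induction hf using Submodule.span_induction with
  | mem f hf =>
    obtain ⟨lam, -, rfl⟩ := hf
    exact msym_comp_perm lam σ x
  | zero => rfl
  | add f g _ _ hf hg => simp only [Pi.add_apply, hf, hg]
  | smul c f _ hf => simp only [Pi.smul_apply, hf]

lemma pSpace_le_map_evalₗ (D : ℕ) :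
    pSpace D n ≤ (MvPolynomial.restrictDegree (Fin n) ℝ D).map (MvPolynomial.evalₗ ℝ (Fin n)) := by
  refine Submodule.span_le.2 ?_
  rintro _ ⟨lam, hlam, rfl⟩
  refine ⟨∑ mu ∈ univ.image fun σ : Equiv.Perm (Fin n) => lam ∘ σ,
    ∏ j, MvPolynomial.X j ^ mu j, Submodule.sum_mem _ fun mu hmu => ?_, ?_⟩
  · obtain ⟨σ, -, rfl⟩ := mem_image.1 hmu
    exact prod_X_pow_mem_restrictDegree fun j => (mem_Lam.1 hlam).1 (σ j)
  · ext x
    simp [msym]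

end SymmetricPolynomials

section AlcoveSum

variable {n : ℕ}

lemma existsUnique_perm_strictAnti_comp {α : Type*} [LinearOrder α] {l : Fin n → α}
    (hl : Function.Injective l) : ∃! σ : Equiv.Perm (Fin n), StrictAnti (l ∘ σ) := by
  have antitone_sort : Antitone (l ∘ Tuple.sort (OrderDual.toDual ∘ l)) :=
    Tuple.monotone_sort (OrderDual.toDual ∘ l)
  refine ⟨_, antitone_sort.strictAnti_of_injective (hl.comp (Equiv.injective _)), fun σ hσ => ?_⟩
  exact Equiv.ext fun j => hl (congr_fun (Tuple.unique_antitone hσ.antitone antitone_sort) j)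

open scoped Classical in
theorem sum_piFinset_eq_factorial_nsmul_sum_strictAnti {α A : Type*} [LinearOrder α]
    [AddCommMonoid A] (s : Finset α) {G : (Fin n → α) → A}
    (hsymm : ∀ (σ : Equiv.Perm (Fin n)) l, G (l ∘ σ) = G l)
    (hzero : ∀ l, ¬ Function.Injective l → G l = 0) :
    ∑ l ∈ Fintype.piFinset fun _ => s, G l =
      n.factorial • ∑ l ∈ Fintype.piFinset fun _ => s with StrictAnti l, G l := by
  have sum_perm (l : Fin n → α) :
      G l = ∑ σ : Equiv.Perm (Fin n), if StrictAnti (l ∘ σ) then G (l ∘ σ) else 0 := by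
    by_cases hl : Function.Injective l
    · obtain ⟨σ, hσ, hunique⟩ := existsUnique_perm_strictAnti_comp hl
      rw [Fintype.sum_eq_single σ fun τ hτ => if_neg fun h => hτ (hunique τ h), if_pos hσ, hsymm]
    · simp [hsymm, hzero l hl]
  have reindex (σ : Equiv.Perm (Fin n)) :
      ∑ l ∈ Fintype.piFinset fun _ => s, (if StrictAnti (l ∘ σ) then G (l ∘ σ) else 0) =
        ∑ l ∈ Fintype.piFinset fun _ => s with StrictAnti l, G l := by
    rw [sum_filter]
    refine sum_equiv (σ.symm.arrowCongr (Equiv.refl α)) (fun l => ?_) fun l _ => rfl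
    simp only [Fintype.mem_piFinset]
    exact (Equiv.forall_congr_left σ.symm).trans Iff.rfl
  calc ∑ l ∈ Fintype.piFinset fun _ => s, G l
      = ∑ σ : Equiv.Perm (Fin n), ∑ l ∈ Fintype.piFinset fun _ => s,
          (if StrictAnti (l ∘ σ) then G (l ∘ σ) else 0) := by
        rw [sum_comm]
        exact sum_congr rfl fun l _ => sum_perm l
    _ = _ := by
        simp only [reindex, sum_const, card_univ, Fintype.card_perm, Fintype.card_fin]

/-- The vector `(n - 1, …, 1, 0)`, whose addition turns weakly decreasing sequences into
strictly decreasing ones. -/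
def staircase (n : ℕ) : Fin n → ℕ := fun j => n - 1 - j

lemma strictAnti_staircase : StrictAnti (staircase n) := fun _ j hij =>
  Nat.sub_lt_sub_left (Nat.lt_of_lt_of_le hij (Nat.le_sub_one_of_lt j.isLt)) hij

lemma antitone_add_val_of_strictAnti {l : Fin n → ℕ} (hl : StrictAnti l) :
    Antitone fun j => l j + (j : ℕ) := by
  intro i j hij
  have maps_to (k : Fin n) (hk : k ∈ Ioc i j) : l k ∈ Ico (l j) (l i) :=
    mem_Ico.2 ⟨hl.antitone (mem_Ioc.1 hk).2, hl (mem_Ioc.1 hk).1⟩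
  have card_le := card_le_card_of_injOn l maps_to hl.injective.injOn
  simp only [Fin.card_Ioc, Nat.card_Ico] at card_le
  have hle : l j ≤ l i := hl.antitone hij
  change l j + j ≤ l i + i
  omega

lemma staircase_le_of_strictAnti {l : Fin n → ℕ} (hl : StrictAnti l) : staircase n ≤ l := by
  intro j
  let last : Fin n := ⟨n - 1, Nat.sub_one_lt_of_lt j.isLt⟩
  have hlast := antitone_add_val_of_strictAnti hl (show j ≤ last from Nat.le_sub_one_of_lt j.isLt)
  simp only [staircase, last] at hlast ⊢
  omega

lemma sub_staircase_mem_Lam {m : ℕ} {l : Fin n → ℕ} (hl : StrictAnti l)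
    (hlt : ∀ j, l j < m + n) : l - staircase n ∈ Lam m n := by
  have hanti := antitone_add_val_of_strictAnti hl
  refine mem_Lam.2 ⟨fun j => ?_, fun i j hij => ?_⟩
  · let first : Fin n := ⟨0, j.pos⟩
    have hle_first := hanti (show first ≤ j from Nat.zero_le _)
    have hfirst_lt := hlt first
    simp only [staircase, Pi.sub_apply, first] at hle_first hfirst_lt ⊢
    omega
  · have hle := hanti hij
    have hstaircase := staircase_le_of_strictAnti hl j
    simp only [staircase, Pi.sub_apply] at hle hstaircase ⊢
    omega

open scoped Classical in
theorem sum_strictAnti_eq_sum_Lam {A : Type*} [AddCommMonoid A] (m : ℕ) (G : (Fin n → ℕ) → A) :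
    ∑ l ∈ Fintype.piFinset fun _ => range (m + n) with StrictAnti l, G l =
      ∑ lam ∈ Lam m n, G (lam + staircase n) := by
  refine sum_nbij' (· - staircase n) (· + staircase n) ?_ ?_ ?_ ?_ ?_
  · intro l hl
    simp only [mem_filter, Fintype.mem_piFinset, mem_range] at hl
    exact sub_staircase_mem_Lam hl.2 hl.1
  · intro lam hlam
    obtain ⟨hle, hanti⟩ := mem_Lam.1 hlam
    simp only [mem_filter, Fintype.mem_piFinset, mem_range]
    refine ⟨fun j => ?_, hanti.add_strictAnti strictAnti_staircase⟩
    have hlam_le := hle j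
    simp only [staircase, Pi.add_apply]
    omega
  · intro l hl
    exact tsub_add_cancel_of_le (staircase_le_of_strictAnti (mem_filter.1 hl).2)
  · intro lam _
    exact add_tsub_cancel_right lam _
  · intro l hl
    rw [tsub_add_cancel_of_le (staircase_le_of_strictAnti (mem_filter.1 hl).2)]

theorem sum_piFinset_range_eq_factorial_nsmul_sum_Lam {A : Type*} [AddCommMonoid A] (m : ℕ)
    {G : (Fin n → ℕ) → A} (hsymm : ∀ (σ : Equiv.Perm (Fin n)) l, G (l ∘ σ) = G l)
    (hzero : ∀ l, ¬ Function.Injective l → G l = 0) :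
    ∑ l ∈ Fintype.piFinset fun _ => range (m + n), G l =
      n.factorial • ∑ lam ∈ Lam m n, G (lam + staircase n) := by
  rw [sum_piFinset_eq_factorial_nsmul_sum_strictAnti _ hsymm hzero, sum_strictAnti_eq_sum_Lam]

end AlcoveSum

theorem gauss_chebyshev_cubature_explicit_nodes
    (εp εm : ℕ) (hεp : εp = 0 ∨ εp = 1) (hεm : εm = 0 ∨ εm = 1)
    (n : ℕ) (hn : 0 < n) (m : ℕ)
    -- a symmetric polynomial of degree at most 2m+1 in each variable
    (f : (Fin n → ℝ) → ℝ)
    (hf : f ∈ pSpace (2 * m + 1) n) :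
    (1 / ((2 * π) ^ n * (n.factorial : ℝ))) *
      (∫ ξv : Fin n → ℝ in Set.univ.pi (fun _ => Set.Ioo 0 π),
        f (fun j => Real.cos (ξv j)) * rhoCJ εp εm n ξv)
    = ((2 * ((m : ℝ) + n) + εp + εm) ^ n)⁻¹ *
        ∑ lh ∈ Lam m n,
          f (fun j => Real.cos (chebNodeVec εp εm m n lh j)) *
            rhoCJ εp εm n (chebNodeVec εp εm m n lh) := by
  obtain ⟨p, hp, rfl⟩ := pSpace_le_map_evalₗ _ hf
  have symmetric (σ : Equiv.Perm (Fin n)) (l : Fin n → ℕ) := congr_arg₂ (· * ·)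
    (pSpace_comp_perm hf σ fun j => cos (chebNode εp εm (m + n) (l j)))
    (rhoCJ_comp_perm (εp := εp) (εm := εm) σ fun j => chebNode εp εm (m + n) (l j))
  have vanishing (l : Fin n → ℕ) (hl : ¬ Function.Injective l) :
      rhoCJ εp εm n (fun j => chebNode εp εm (m + n) (l j)) = 0 :=
    rhoCJ_eq_zero_of_not_injective fun h =>
      hl (Function.Injective.of_comp (f := chebNode εp εm (m + n)) h)
  have cubature := integral_eval_cos_mul_rhoCJ hεp hεm hp (N := m + n) (by omega)
  rw [sum_piFinset_range_eq_factorial_nsmul_sum_Lam m symmetric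
    fun l hl => mul_eq_zero_of_right _ (vanishing l hl)] at cubature
  simp only [MvPolynomial.evalₗ_apply, cubature]
  rw [nsmul_eq_mul, div_pow]
  push_cast
  have denominator_ne_zero : (2 * ((m : ℝ) + n) + εp + εm) ≠ 0 := by positivity
  field_simp [denominator_ne_zero]
  rfl

end
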